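/- On the open set {(x,y,z) ∈ ℝ³ : |z| < 1}, the four smooth functions 1, z, √(1−z²)·sin x, √(1−z²)·cos x span a four-dimensional space of smooth functions that is closed under the Lagrange bracket, and the resulting four-dimensional real Lie algebra is isomorphic to u(2). Explicitly, writing f₁ = 1, f₂ = z, f₃ = √(1−z²) sin x, f₄ = √(1−z²) cos x, one has {f₁, f_i} = 0 for all i, {f₂, f₃} = −f₄, {f₂, f₄} = f₃, and {f₃, f₄} = −f₂. -/

import Mathlib

noncomputable section

open Matrix

/-- `ℝ³` with coordinates `(x, y, z)`. -/
abbrev R3 : Type := ℝ × ℝ × ℝ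

/-- Partial derivative in `x` of a function on `ℝ³`. -/
noncomputable def px (f : R3 → ℝ) (p : R3) : ℝ := fderiv ℝ f p (1, 0, 0)

/-- Partial derivative in `y` of a function on `ℝ³`. -/
noncomputable def py (f : R3 → ℝ) (p : R3) : ℝ := fderiv ℝ f p (0, 1, 0)

/-- Partial derivative in `z` of a function on `ℝ³`. -/
noncomputable def pz (f : R3 → ℝ) (p : R3) : ℝ := fderiv ℝ f p (0, 0, 1)

/-- The Lagrange bracket
`{f,g} = f_x g_z − f_z g_x + z (f_y g_z − f_z g_y) + f g_y − g f_y`. -/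
noncomputable def lagr (f g : R3 → ℝ) (p : R3) : ℝ :=
  px f p * pz g p - pz f p * px g p
    + p.2.2 * (py f p * pz g p - pz f p * py g p)
    + f p * py g p - g p * py f p

/-- `f₁ = 1`. -/
noncomputable def c1 : R3 → ℝ := fun _ => 1

/-- `f₂ = z`. -/
noncomputable def c2 : R3 → ℝ := fun p => p.2.2

/-- `f₃ = √(1−z²)·sin x`. -/
noncomputable def c3 : R3 → ℝ := fun p => Real.sqrt (1 - p.2.2 ^ 2) * Real.sin p.1

/-- `f₄ = √(1−z²)·cos x`. -/
noncomputable def c4 : R3 → ℝ := fun p => Real.sqrt (1 - p.2.2 ^ 2) * Real.cos p.1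

/-- The span of `f₁, f₂, f₃, f₄` inside the functions on `ℝ³`. -/
noncomputable def Vspan : Submodule ℝ (R3 → ℝ) := Submodule.span ℝ {c1, c2, c3, c4}

/-! On functions independent of `y` the Lagrange bracket is the Poisson bracket
`f_x g_z − f_z g_x`. Reading `x` as the azimuth and `z` as the height on the unit sphere, which are
canonical coordinates there by Archimedes' theorem, `f₄, f₃, f₂` become the three Euclidean
coordinates of the sphere. These span `so(3) ≅ su(2)`, and the constant `f₁` supplies the
one-dimensional centre that completes it to `u(2)`. -/

section Bracket

variable {f g h : R3 → ℝ} {p : R3}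

lemma lagr_self (f : R3 → ℝ) (p : R3) : lagr f f p = 0 := by
  unfold lagr
  ring

lemma lagr_swap (f g : R3 → ℝ) (p : R3) : lagr f g p = -lagr g f p := by
  unfold lagr
  ring

lemma lagr_add_left (hf : DifferentiableAt ℝ f p) (hg : DifferentiableAt ℝ g p) :
    lagr (f + g) h p = lagr f h p + lagr g h p := by
  simp only [lagr, px, py, pz, fderiv_add hf hg, _root_.add_apply, Pi.add_apply]
  ring

lemma lagr_const_smul_left (a : ℝ) (hf : DifferentiableAt ℝ f p) :
    lagr (a • f) g p = a * lagr f g p := by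
  simp only [lagr, px, py, pz, fderiv_const_smul hf a, _root_.smul_apply,
    Pi.smul_apply, smul_eq_mul]
  ring

end Bracket

section SpanClosed

variable {S : Set (R3 → ℝ)} {U : Set R3} {W : Submodule ℝ (R3 → ℝ)} {f g : R3 → ℝ}

/-- The bracket of `f` and `g` agrees on `U` with a function in `W`. Agreement is asked only on `U`
because `lagr f g` takes junk values where `f` or `g` is not differentiable. -/
def LagrMemOn (W : Submodule ℝ (R3 → ℝ)) (U : Set R3) (f g : R3 → ℝ) : Prop :=
  ∃ w ∈ W, Set.EqOn (lagr f g) w U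

lemma LagrMemOn.symm (hfg : LagrMemOn W U f g) : LagrMemOn W U g f := by
  obtain ⟨w, hw, hfgw⟩ := hfg
  exact ⟨-w, W.neg_mem hw, fun p hp => by rw [lagr_swap, hfgw hp, Pi.neg_apply]⟩

lemma LagrMemOn.self (W : Submodule ℝ (R3 → ℝ)) (U : Set R3) (f : R3 → ℝ) : LagrMemOn W U f f :=
  ⟨0, W.zero_mem, fun p _ => lagr_self f p⟩

lemma differentiableAt_of_mem_span {p : R3} (hS : ∀ f ∈ S, DifferentiableAt ℝ f p)
    (hf : f ∈ Submodule.span ℝ S) :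
    DifferentiableAt ℝ f p := by
  induction hf using Submodule.span_induction with
  | mem f hf => exact hS f hf
  | zero => exact differentiableAt_const 0
  | add f g _ _ hf hg => exact hf.add hg
  | smul a f _ hf => exact hf.const_smul a

lemma LagrMemOn.of_mem_span_left (hS : ∀ f ∈ S, ∀ p ∈ U, DifferentiableAt ℝ f p)
    (hSg : ∀ f ∈ S, LagrMemOn W U f g) (hf : f ∈ Submodule.span ℝ S) : LagrMemOn W U f g := by
  have hdiff {f : R3 → ℝ} (hf : f ∈ Submodule.span ℝ S) {p : R3} (hp : p ∈ U) :
      DifferentiableAt ℝ f p :=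
    differentiableAt_of_mem_span (fun f hf => hS f hf p hp) hf
  induction hf using Submodule.span_induction with
  | mem f hf => exact hSg f hf
  | zero => exact ⟨0, W.zero_mem, fun p _ => by simp [lagr, px, py, pz]⟩
  | add f₁ f₂ hf₁ hf₂ ih₁ ih₂ =>
    obtain ⟨w₁, hw₁, h₁⟩ := ih₁
    obtain ⟨w₂, hw₂, h₂⟩ := ih₂
    exact ⟨w₁ + w₂, W.add_mem hw₁ hw₂, fun p hp => by
      rw [lagr_add_left (hdiff hf₁ hp) (hdiff hf₂ hp), h₁ hp, h₂ hp, Pi.add_apply]⟩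
  | smul a f hf ih =>
    obtain ⟨w, hw, h⟩ := ih
    exact ⟨a • w, W.smul_mem a hw, fun p hp => by
      rw [lagr_const_smul_left a (hdiff hf hp), h hp, Pi.smul_apply, smul_eq_mul]⟩

theorem LagrMemOn.of_mem_span (hS : ∀ f ∈ S, ∀ p ∈ U, DifferentiableAt ℝ f p)
    (hSS : S.Pairwise (LagrMemOn W U)) (hf : f ∈ Submodule.span ℝ S)
    (hg : g ∈ Submodule.span ℝ S) : LagrMemOn W U f g := by
  have hgen : ∀ f ∈ S, ∀ g ∈ S, LagrMemOn W U f g := by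
    intro f hf g hg
    obtain rfl | hne := eq_or_ne f g
    · exact LagrMemOn.self W U f
    · exact hSS hf hg hne
  refine LagrMemOn.of_mem_span_left hS (fun f hf => LagrMemOn.symm ?_) hf
  exact LagrMemOn.of_mem_span_left hS (fun g hg => hgen g hg f hf) hg

end SpanClosed

section IndependentOfY

variable {f g : R3 → ℝ} {p : R3}

/-- The coordinate covector `dx` on `ℝ³`. -/
def dx : R3 →L[ℝ] ℝ := ContinuousLinearMap.fst ℝ ℝ (ℝ × ℝ)

/-- The coordinate covector `dz` on `ℝ³`. -/
def dz : R3 →L[ℝ] ℝ := (ContinuousLinearMap.snd ℝ ℝ ℝ).comp (ContinuousLinearMap.snd ℝ ℝ (ℝ × ℝ))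

lemma lagr_eq_of_hasFDerivAt {a b a' b' : ℝ} (hf : HasFDerivAt f (a • dx + b • dz) p)
    (hg : HasFDerivAt g (a' • dx + b' • dz) p) : lagr f g p = a * b' - b * a' := by
  simp [lagr, px, py, pz, hf.fderiv, hg.fderiv, dx, dz]

lemma hasFDerivAt_height_mul_azimuth {r θ : ℝ → ℝ} {r' θ' : ℝ} (hr : HasDerivAt r r' p.2.2)
    (hθ : HasDerivAt θ θ' p.1) :
    HasFDerivAt (fun q : R3 => r q.2.2 * θ q.1)
      ((r p.2.2 * θ') • dx + (r' * θ p.1) • dz) p := by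
  have hr' : HasFDerivAt (fun q : R3 => r q.2.2) (r' • dz) p :=
    hr.comp_hasFDerivAt p dz.hasFDerivAt
  have hθ' : HasFDerivAt (fun q : R3 => θ q.1) (θ' • dx) p :=
    hθ.comp_hasFDerivAt p dx.hasFDerivAt
  exact (hr'.mul hθ').congr_fderiv (by rw [smul_smul, smul_smul, mul_comm r'])

lemma one_sub_sq_pos {z : ℝ} (hz : |z| < 1) : 0 < 1 - z ^ 2 :=
  sub_pos.2 ((sq_lt_one_iff_abs_lt_one z).2 hz)

lemma hasDerivAt_sqrt_one_sub_sq {z : ℝ} (hz : |z| < 1) :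
    HasDerivAt (fun t => √(1 - t ^ 2)) (-z / √(1 - z ^ 2)) z := by
  have hsq : HasDerivAt (fun t => 1 - t ^ 2) (-(2 * z)) z := by
    simpa using (hasDerivAt_pow 2 z).const_sub 1
  refine (hsq.sqrt (one_sub_sq_pos hz).ne').congr_deriv ?_
  rw [← mul_neg, mul_div_mul_left _ _ two_ne_zero]

end IndependentOfY

section Generators

variable {p : R3}

/-- The open set `|z| < 1` on which the four generators are smooth. -/
def slab : Set R3 := {p | |p.2.2| < 1}

lemma hasFDerivAt_c1 (p : R3) : HasFDerivAt c1 ((0 : ℝ) • dx + (0 : ℝ) • dz) p := by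
  have h : HasFDerivAt c1 (0 : R3 →L[ℝ] ℝ) p := hasFDerivAt_const 1 p
  simpa only [zero_smul, add_zero] using h

lemma hasFDerivAt_c2 (p : R3) : HasFDerivAt c2 ((0 : ℝ) • dx + (1 : ℝ) • dz) p := by
  have h : HasFDerivAt c2 dz p := dz.hasFDerivAt
  simpa only [zero_smul, one_smul, zero_add] using h

lemma hasFDerivAt_c3 (hp : p ∈ slab) :
    HasFDerivAt c3 ((√(1 - p.2.2 ^ 2) * Real.cos p.1) • dx +
      (-p.2.2 / √(1 - p.2.2 ^ 2) * Real.sin p.1) • dz) p :=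
  hasFDerivAt_height_mul_azimuth (hasDerivAt_sqrt_one_sub_sq hp) (Real.hasDerivAt_sin p.1)

lemma hasFDerivAt_c4 (hp : p ∈ slab) :
    HasFDerivAt c4 ((√(1 - p.2.2 ^ 2) * -Real.sin p.1) • dx +
      (-p.2.2 / √(1 - p.2.2 ^ 2) * Real.cos p.1) • dz) p :=
  hasFDerivAt_height_mul_azimuth (hasDerivAt_sqrt_one_sub_sq hp) (Real.hasDerivAt_cos p.1)

lemma lagr_c1_c2 (p : R3) : lagr c1 c2 p = 0 := by
  rw [lagr_eq_of_hasFDerivAt (hasFDerivAt_c1 p) (hasFDerivAt_c2 p)]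
  ring

lemma lagr_c1_c3 (hp : p ∈ slab) : lagr c1 c3 p = 0 := by
  rw [lagr_eq_of_hasFDerivAt (hasFDerivAt_c1 p) (hasFDerivAt_c3 hp)]
  ring

lemma lagr_c1_c4 (hp : p ∈ slab) : lagr c1 c4 p = 0 := by
  rw [lagr_eq_of_hasFDerivAt (hasFDerivAt_c1 p) (hasFDerivAt_c4 hp)]
  ring

lemma lagr_c2_c3 (hp : p ∈ slab) : lagr c2 c3 p = -c4 p := by
  rw [lagr_eq_of_hasFDerivAt (hasFDerivAt_c2 p) (hasFDerivAt_c3 hp), c4]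
  ring

lemma lagr_c2_c4 (hp : p ∈ slab) : lagr c2 c4 p = c3 p := by
  rw [lagr_eq_of_hasFDerivAt (hasFDerivAt_c2 p) (hasFDerivAt_c4 hp), c3]
  ring

lemma lagr_c3_c4 (hp : p ∈ slab) : lagr c3 c4 p = -c2 p := by
  have hsqrt : √(1 - p.2.2 ^ 2) ≠ 0 :=
    (Real.sqrt_pos.2 (one_sub_sq_pos hp)).ne'
  rw [lagr_eq_of_hasFDerivAt (hasFDerivAt_c3 hp) (hasFDerivAt_c4 hp), c2]
  field_simp
  linear_combination -p.2.2 * Real.sin_sq_add_cos_sq p.1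

theorem lagrMemOn_Vspan {u v : R3 → ℝ} (hu : u ∈ Vspan) (hv : v ∈ Vspan) :
    LagrMemOn Vspan slab u v := by
  refine LagrMemOn.of_mem_span (S := {c1, c2, c3, c4}) ?_ ?_ hu hv
  · rintro f (rfl | rfl | rfl | rfl) p hp
    exacts [(hasFDerivAt_c1 p).differentiableAt, (hasFDerivAt_c2 p).differentiableAt,
      (hasFDerivAt_c3 hp).differentiableAt, (hasFDerivAt_c4 hp).differentiableAt]
  · have hc2 : c2 ∈ Vspan := Submodule.subset_span (by simp)
    have hc3 : c3 ∈ Vspan := Submodule.subset_span (by simp)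
    have hc4 : c4 ∈ Vspan := Submodule.subset_span (by simp)
    have h12 : LagrMemOn Vspan slab c1 c2 := ⟨0, Vspan.zero_mem, fun p _ => lagr_c1_c2 p⟩
    have h13 : LagrMemOn Vspan slab c1 c3 := ⟨0, Vspan.zero_mem, fun _ hp => lagr_c1_c3 hp⟩
    have h14 : LagrMemOn Vspan slab c1 c4 := ⟨0, Vspan.zero_mem, fun _ hp => lagr_c1_c4 hp⟩
    have h23 : LagrMemOn Vspan slab c2 c3 := ⟨-c4, Vspan.neg_mem hc4, fun _ hp => lagr_c2_c3 hp⟩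
    have h24 : LagrMemOn Vspan slab c2 c4 := ⟨c3, hc3, fun _ hp => lagr_c2_c4 hp⟩
    have h34 : LagrMemOn Vspan slab c3 c4 := ⟨-c2, Vspan.neg_mem hc2, fun _ hp => lagr_c3_c4 hp⟩
    have : Std.Symm (LagrMemOn Vspan slab) := ⟨fun _ _ => LagrMemOn.symm⟩
    simp [Set.pairwise_insert_of_symm, h12, h13, h14, h23, h24, h34]

theorem linearIndependent_domRestrict_slab :
    LinearIndependent ℝ
      ![slab.domRestrict c1, slab.domRestrict c2, slab.domRestrict c3, slab.domRestrict c4] := by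
  rw [Fintype.linearIndependent_iff]
  intro a ha
  have hval (p : R3) (hp : p ∈ slab) :
      a 0 + a 1 * p.2.2 + a 2 * (√(1 - p.2.2 ^ 2) * Real.sin p.1) +
        a 3 * (√(1 - p.2.2 ^ 2) * Real.cos p.1) = 0 := by
    simpa [Fin.sum_univ_four, Set.domRestrict_apply, c1, c2, c3, c4] using congrFun ha ⟨p, hp⟩
  have hzero : a 0 + a 3 = 0 := by simpa using hval (0, 0, 0) (by simp [slab])
  have hpi : a 0 - a 3 = 0 := by
    simpa [sub_eq_add_neg] using hval (Real.pi, 0, 0) (by simp [slab])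
  have hpi_div_two : a 0 + a 2 = 0 := by simpa using hval (Real.pi / 2, 0, 0) (by simp [slab])
  have h0 : a 0 = 0 := by linarith
  have h2 : a 2 = 0 := by linarith
  have h3 : a 3 = 0 := by linarith
  have h1 : a 1 = 0 := by
    simpa [h0, h2, h3] using hval (0, 0, 1 / 2) (by norm_num [slab, abs_of_pos])
  intro i
  fin_cases i
  exacts [h0, h1, h2, h3]

end Generators

section UnitaryAlgebra

open Complex

/-- The three Pauli matrices. -/
def pauli : Fin 3 → Matrix (Fin 2) (Fin 2) ℂ :=
  ![!![0, 1; 1, 0], !![0, -I; I, 0], !![1, 0; 0, -1]]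

lemma conjTranspose_pauli (j : Fin 3) : (pauli j)ᴴ = pauli j := by
  fin_cases j <;> ext k l <;> fin_cases k <;> fin_cases l <;> simp [pauli]

-- Addition in `Fin 3` is cyclic, so this is the whole commutator table.
lemma lie_pauli (j : Fin 3) : ⁅pauli j, pauli (j + 1)⁆ = (2 * I) • pauli (j + 2) := by
  fin_cases j <;> ext k l <;> fin_cases k <;> fin_cases l <;>
    simp [pauli, Ring.lie_def] <;> ring_nf <;> simp

/-- A real basis of `u(2)`: the central element `i` followed by `i / 2` times the three Pauli
matrices. The factor `1 / 2` makes its structure constants those of `c1, c2, c3, c4`. -/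
def u2Basis : Fin 4 → Matrix (Fin 2) (Fin 2) ℂ :=
  Fin.cons (I • 1) fun j => (I / 2) • pauli j

lemma sum_smul_u2Basis (a : Fin 4 → ℝ) :
    ∑ i, a i • u2Basis i =
      !![(a 0 + a 3 / 2) * I, (a 2 + a 1 * I) / 2; (-a 2 + a 1 * I) / 2, (a 0 - a 3 / 2) * I] := by
  rw [Fin.sum_univ_succ, Fin.sum_univ_three]
  simp only [u2Basis, Fin.cons_zero, Fin.cons_succ]
  ext j k
  fin_cases j <;> fin_cases k <;> simp [pauli, Complex.ext_iff] <;> ring_nf <;> simp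

theorem linearIndependent_u2Basis : LinearIndependent ℝ u2Basis := by
  rw [Fintype.linearIndependent_iff]
  intro a ha
  rw [sum_smul_u2Basis] at ha
  have h00 : a 0 + a 3 / 2 = 0 := by simpa using congrArg im (congrFun (congrFun ha 0) 0)
  have h11 : a 0 - a 3 / 2 = 0 := by simpa using congrArg im (congrFun (congrFun ha 1) 1)
  have h1 : a 1 = 0 := by simpa using congrArg im (congrFun (congrFun ha 0) 1)
  have h2 : a 2 = 0 := by simpa using congrArg re (congrFun (congrFun ha 0) 1)
  have h0 : a 0 = 0 := by linarith
  have h3 : a 3 = 0 := by linarith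
  intro i
  fin_cases i
  exacts [h0, h1, h2, h3]

lemma conjTranspose_u2Basis (i : Fin 4) : (u2Basis i)ᴴ = -u2Basis i := by
  induction i using Fin.cases with
  | zero => simp [u2Basis]
  | succ j => simp [u2Basis, conjTranspose_smul, conjTranspose_pauli, neg_div]

lemma mem_span_range_u2Basis {m : Matrix (Fin 2) (Fin 2) ℂ} (hm : mᴴ = -m) :
    m ∈ Submodule.span ℝ (Set.range u2Basis) := by
  have hentry (j k : Fin 2) : star (m k j) = -m j k := congrFun (congrFun hm j) k
  have h00 : (m 0 0).re = 0 := by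
    have : (m 0 0).re = -(m 0 0).re := by simpa using congrArg re (hentry 0 0)
    linarith
  have h11 : (m 1 1).re = 0 := by
    have : (m 1 1).re = -(m 1 1).re := by simpa using congrArg re (hentry 1 1)
    linarith
  have hre : (m 1 0).re = -(m 0 1).re := by simpa using congrArg re (hentry 0 1)
  have him : (m 1 0).im = (m 0 1).im := by simpa using congrArg im (hentry 0 1)
  rw [Submodule.mem_span_range_iff_exists_fun]
  refine ⟨![((m 0 0).im + (m 1 1).im) / 2, 2 * (m 0 1).im, 2 * (m 0 1).re,
    (m 0 0).im - (m 1 1).im], ?_⟩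
  rw [sum_smul_u2Basis]
  ext j k
  fin_cases j <;> fin_cases k <;> simp [Complex.ext_iff, h00, h11, hre, him] <;> ring

lemma u2Basis_zero_commute (m : Matrix (Fin 2) (Fin 2) ℂ) : Commute (u2Basis 0) m :=
  (Commute.one_left m).smul_left I

lemma lie_u2Basis_succ (j : Fin 3) :
    ⁅u2Basis j.succ, u2Basis (j + 1).succ⁆ = -u2Basis (j + 2).succ := by
  have hcoeff : I / 2 * (I / 2 * (2 * I)) = -(I / 2) := by
    linear_combination I / 2 * I_mul_I
  calc ⁅u2Basis j.succ, u2Basis (j + 1).succ⁆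
      = (I / 2 * (I / 2)) • ⁅pauli j, pauli (j + 1)⁆ := by
        simp only [u2Basis, Fin.cons_succ, Ring.lie_def, smul_mul_smul_comm, smul_sub]
    _ = -((I / 2) • pauli (j + 2)) := by
        rw [lie_pauli, smul_smul, mul_assoc, hcoeff, neg_smul]
    _ = -u2Basis (j + 2).succ := rfl

end UnitaryAlgebra

/-- On the open set `{|z| < 1}` the functions
`1, z, √(1−z²) sin x, √(1−z²) cos x` span a four-dimensional space closed under the
Lagrange bracket, with `{f₁, f_i} = 0`, `{f₂,f₃} = −f₄`, `{f₂,f₄} = f₃`,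
`{f₃,f₄} = −f₂`, and the resulting four-dimensional real Lie algebra is isomorphic to
`u(2)` (realized as a basis of the skew-Hermitian `2 × 2` complex matrices with the same
structure constants, `f₁` corresponding to a central element). -/
theorem stmt19 :
    (∀ c : Fin 4 → ℝ,
      (∀ p : R3, |p.2.2| < 1 →
        c 0 * c1 p + c 1 * c2 p + c 2 * c3 p + c 3 * c4 p = 0) → c = 0) ∧
    (∀ u ∈ Vspan, ∀ v ∈ Vspan, ∃ w ∈ Vspan, ∀ p : R3, |p.2.2| < 1 → lagr u v p = w p) ∧
    (∀ p : R3, |p.2.2| < 1 →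
      lagr c1 c1 p = 0 ∧ lagr c1 c2 p = 0 ∧ lagr c1 c3 p = 0 ∧ lagr c1 c4 p = 0 ∧
      lagr c2 c3 p = -c4 p ∧ lagr c2 c4 p = c3 p ∧ lagr c3 c4 p = -c2 p) ∧
    (∃ φ : Fin 4 → Matrix (Fin 2) (Fin 2) ℂ,
      LinearIndependent ℝ φ ∧
      (∀ i : Fin 4, (φ i)ᴴ = -φ i) ∧
      (∀ m : Matrix (Fin 2) (Fin 2) ℂ, mᴴ = -m → m ∈ Submodule.span ℝ (Set.range φ)) ∧
      (∀ i : Fin 4, φ 0 * φ i - φ i * φ 0 = 0) ∧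
      φ 1 * φ 2 - φ 2 * φ 1 = -φ 3 ∧
      φ 1 * φ 3 - φ 3 * φ 1 = φ 2 ∧
      φ 2 * φ 3 - φ 3 * φ 2 = -φ 1) := by
  refine ⟨fun c hc => ?_, fun u hu v hv => lagrMemOn_Vspan hu hv,
    fun p hp => ⟨lagr_self c1 p, lagr_c1_c2 p, lagr_c1_c3 hp, lagr_c1_c4 hp, lagr_c2_c3 hp,
      lagr_c2_c4 hp, lagr_c3_c4 hp⟩,
    u2Basis, linearIndependent_u2Basis, conjTranspose_u2Basis, fun m => mem_span_range_u2Basis,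
    fun i => sub_eq_zero.2 (u2Basis_zero_commute (u2Basis i)), lie_u2Basis_succ 0,
    neg_inj.1 ((neg_sub _ _).trans (lie_u2Basis_succ 2)), lie_u2Basis_succ 1⟩
  exact funext <| Fintype.linearIndependent_iff.1 linearIndependent_domRestrict_slab c <|
    funext fun p => by simpa [Fin.sum_univ_four, Set.domRestrict_apply] using hc p p.2
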